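/- arXiv:2210.04274 — 3 statements merged into one kernel-verified Lean document; each statement's English description precedes it below -/
import Mathlib

section
/- Let X be a set and let FR(X) = X × F(X) be the free rack on X, where F(X) is the free group on X, with operations (a,u) ▷ (b,v) = (a, u·v⁻¹·b·v) and (a,u) ▷⁻¹ (b,v) = (a, u·v⁻¹·b⁻¹·v). Then every subrack R of FR(X) is a free rack: there exists a subset S ⊆ R such that R, equipped with the operations induced from FR(X), together with the inclusion map S ↪ R, satisfies the universal property of the free rack on S; that is, for every rack Q and every function ρ : S → Q there exists a unique rack homomorphism ρ̄ : R → Q whose restriction to S equals ρ. -/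
/-- A rack: a set with two binary operations `act` (`▷`) and `inv` (`▷⁻¹`) satisfying
right self-distributivity for both operations and the cancellation laws
`(x ▷ y) ▷⁻¹ y = x = (x ▷⁻¹ y) ▷ y`. -/
structure RackStr (α : Type*) where
  act : α → α → α
  inv : α → α → α
  act_dist : ∀ x y z, act (act x y) z = act (act x z) (act y z)
  inv_dist : ∀ x y z, inv (inv x y) z = inv (inv x z) (inv y z)
  act_inv : ∀ x y, inv (act x y) y = x
  inv_act : ∀ x y, act (inv x y) y = x

/-- A rack homomorphism: a map preserving `▷`. -/
def IsRackHom {α β : Type*} (Ra : RackStr α) (Rb : RackStr β) (f : α → β) : Prop :=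
  ∀ x y, f (Ra.act x y) = Rb.act (f x) (f y)

/-- The free rack on `X`: the set `X × F(X)` with
`(a,u) ▷ (b,v) = (a, u·v⁻¹·b·v)` and `(a,u) ▷⁻¹ (b,v) = (a, u·v⁻¹·b⁻¹·v)`. -/
def freeRack (X : Type*) : RackStr (X × FreeGroup X) where
  act p q := (p.1, p.2 * q.2⁻¹ * FreeGroup.of q.1 * q.2)
  inv p q := (p.1, p.2 * q.2⁻¹ * (FreeGroup.of q.1)⁻¹ * q.2)
  act_dist := by
    intro x y z
    simp only [Prod.mk.injEq, true_and]
    group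
  inv_dist := by
    intro x y z
    simp only [Prod.mk.injEq, true_and]
    group
  act_inv := by
    intro x y
    simp only
    rw [Prod.mk.injEq]
    constructor
    · rfl
    · group
  inv_act := by
    intro x y
    simp only
    rw [Prod.mk.injEq]
    constructor
    · rfl
    · group

/-- The rack structure induced on a subset closed under `▷` and `▷⁻¹` (a subrack). -/
def RackStr.subrack {α : Type*} (Ra : RackStr α) (R : Set α)
    (hact : ∀ x ∈ R, ∀ y ∈ R, Ra.act x y ∈ R)
    (hinv : ∀ x ∈ R, ∀ y ∈ R, Ra.inv x y ∈ R) : RackStr R where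
  act x y := ⟨Ra.act x y, hact x x.2 y y.2⟩
  inv x y := ⟨Ra.inv x y, hinv x x.2 y y.2⟩
  act_dist x y z := Subtype.ext (Ra.act_dist x y z)
  inv_dist x y z := Subtype.ext (Ra.inv_dist x y z)
  act_inv x y := Subtype.ext (Ra.act_inv x y)
  inv_act x y := Subtype.ext (Ra.inv_act x y)

section FreeSub
variable {X : Type*}

theorem fsr_ind (p : FreeGroup X → Prop) (h1 : p 1)
    (hs : ∀ w a, p w ↔ p (w * FreeGroup.of a)) (w : FreeGroup X) : p w := by
  have key : ∀ u : FreeGroup X, ∀ w, p w ↔ p (w * u) := by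
    intro u
    induction u using FreeGroup.induction_on with
    | C1 => intro w; simp
    | of a => intro w; exact hs w a
    | inv_of a _ => 
      intro w
      have := hs (w * (FreeGroup.of a)⁻¹) a
      rw [inv_mul_cancel_right] at this
      exact this.symm
    | mul u v hu hv => 
      intro w
      rw [hu w, hv (w * u), mul_assoc]
  have := (key w 1).1 h1
  rwa [one_mul] at this

/-- A function on the Cayley graph with prescribed edge labels. -/
theorem fsr_exists {H : Type*} [Group H] (e : FreeGroup X → X → H) :
    ∃ C : FreeGroup X → H, C 1 = 1 ∧ ∀ w a, C (w * FreeGroup.of a) = C w * e w a := by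
  let P : X → Equiv.Perm (FreeGroup X × H) := fun a =>
    { toFun := fun p => (p.1 * FreeGroup.of a, p.2 * e p.1 a)
      invFun := fun p => (p.1 * (FreeGroup.of a)⁻¹, p.2 * (e (p.1 * (FreeGroup.of a)⁻¹) a)⁻¹)
      left_inv := by rintro ⟨w, h⟩; simp
      right_inv := by rintro ⟨w, h⟩; simp }
  let Φ : FreeGroup X →* Equiv.Perm (FreeGroup X × H) := FreeGroup.lift (fun a => (P a)⁻¹)
  let D : FreeGroup X → FreeGroup X × H := fun w => Φ w⁻¹ (1, 1)
  have hD1 : D 1 = (1, 1) := by simp only [D, inv_one, map_one]; rfl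
  have hD : ∀ w a, D (w * FreeGroup.of a) = P a (D w) := by
    intro w a
    simp only [D, Φ, mul_inv_rev, map_mul, map_inv, FreeGroup.lift_apply_of, inv_inv,
      Equiv.Perm.mul_apply]
  have hP : ∀ a p, P a p = (p.1 * FreeGroup.of a, p.2 * e p.1 a) := fun _ _ => rfl
  have hfst : ∀ w, (D w).1 = w := by
    intro w
    refine fsr_ind (fun w => (D w).1 = w) (by rw [hD1]) ?_ w
    intro w a
    simp only [hD, hP, mul_left_inj]
  refine ⟨fun w => (D w).2, by simp only [hD1], ?_⟩
  intro w a
  simp only [hD, hP, hfst]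

theorem fsr_mul {H : Type*} [Group H] (e : FreeGroup X → X → H) (C : FreeGroup X → H)
    (C1 : C 1 = 1) (hC : ∀ w a, C (w * FreeGroup.of a) = C w * e w a)
    (g : FreeGroup X) (hg : ∀ w a, e (g * w) a = e w a) (w : FreeGroup X) :
    C (g * w) = C g * C w := by
  refine fsr_ind (fun w => C (g * w) = C g * C w) (by simp [C1]) ?_ w
  intro w a
  simp only [hC, ← mul_assoc, hg, mul_left_inj]

/-- the boundary -/
def fsrBd (p : X × FreeGroup X) : FreeGroup X := p.2⁻¹ * FreeGroup.of p.1 * p.2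

/-- right translation -/
theorem fsr_act (p q : X × FreeGroup X) : (freeRack X).act p q = (p.1, p.2 * fsrBd q) := by
  simp [freeRack, fsrBd, mul_assoc]

theorem fsr_inv (p q : X × FreeGroup X) : (freeRack X).inv p q = (p.1, p.2 * (fsrBd q)⁻¹) := by
  simp [freeRack, fsrBd, mul_assoc]

/-- the associated subgroup -/
def fsrG (R : Set (X × FreeGroup X)) : Subgroup (FreeGroup X) := Subgroup.closure (fsrBd '' R)

theorem fsr_stable (R : Set (X × FreeGroup X))
    (hact : ∀ p ∈ R, ∀ q ∈ R, (freeRack X).act p q ∈ R)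
    (hinv : ∀ p ∈ R, ∀ q ∈ R, (freeRack X).inv p q ∈ R)
    (g : FreeGroup X) (hg : g ∈ fsrG R) : ∀ a u, (a, u) ∈ R → (a, u * g) ∈ R := by
  induction hg using Subgroup.closure_induction'' with
  | mem x hx => 
    obtain ⟨q, hq, rfl⟩ := hx
    intro a u h
    have := hact _ h _ hq
    rwa [fsr_act] at this
  | inv_mem x hx => 
    obtain ⟨q, hq, rfl⟩ := hx
    intro a u h
    have := hinv _ h _ hq
    rwa [fsr_inv] at this
  | one => intro a u h; simpa using h
  | mul x y _ _ hx hy => 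
    intro a u h
    rw [← mul_assoc]
    exact hy _ _ (hx _ _ h)

/-- Basis data for the subrack. -/
theorem fsr_basis.{u, v} {X : Type u} (R : Set (X × FreeGroup X))
    (hact : ∀ p ∈ R, ∀ q ∈ R, (freeRack X).act p q ∈ R)
    (hinv : ∀ p ∈ R, ∀ q ∈ R, (freeRack X).inv p q ∈ R) :
    ∃ C : FreeGroup X → FreeGroup X,
      (∀ g ∈ fsrG R, ∀ w, C (g * w) = C w) ∧
      (∀ w, w * (C w)⁻¹ ∈ fsrG R) ∧
      (∀ g ∈ fsrG R, g ∈ fsrG {p | p ∈ R ∧ C p.2⁻¹ = p.2⁻¹}) ∧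
      ∀ (H : Type v) [Group H] (A : Subgroup H) (ψ : X × FreeGroup X → H), (∀ p, ψ p ∈ A) →
        ∃ φ : FreeGroup X → H, (∀ w, φ w ∈ A) ∧ φ 1 = 1 ∧
          (∀ g ∈ fsrG R, ∀ w, φ (g * w) = φ g * φ w) ∧
          ∀ p ∈ R, C p.2⁻¹ = p.2⁻¹ → φ (fsrBd p) = ψ p := by
  classical
  have hst := fsr_stable R hact hinv
  have hiff : ∀ g ∈ fsrG R, ∀ w a, (a, (g * w)⁻¹) ∈ R ↔ (a, w⁻¹) ∈ R := by
    intro g hg w a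
    constructor
    · intro h
      have := hst g hg _ _ h
      simpa using this
    · intro h
      have := hst g⁻¹ (inv_mem hg) _ _ h
      simpa using this
  have hbd : ∀ p ∈ R, fsrBd p ∈ fsrG R := fun p hp =>
    Subgroup.subset_closure ⟨p, hp, rfl⟩
  obtain ⟨C, C1, hC⟩ := fsr_exists (X := X)
    (fun w a => if (a, w⁻¹) ∈ R then (1 : FreeGroup X) else FreeGroup.of a)
  have hmul : ∀ g ∈ fsrG R, ∀ w, C (g * w) = C g * C w := by
    intro g hg w
    refine fsr_mul _ C C1 hC g ?_ w
    intro w a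
    simp only [hiff g hg w a]
  have hCG : ∀ g ∈ fsrG R, C g = 1 := by
    intro g hg
    induction hg using Subgroup.closure_induction with
    | mem x hx =>
      obtain ⟨p, hp, rfl⟩ := hx
      have h1 := hmul _ (hbd p hp) p.2⁻¹
      have h2 := hC p.2⁻¹ p.1
      have h3 : fsrBd p * p.2⁻¹ = p.2⁻¹ * FreeGroup.of p.1 := by simp [fsrBd]
      rw [h3, h2, if_pos (by simpa using hp), mul_one] at h1
      exact (right_eq_mul.mp h1)
    | one => exact C1
    | mul x y hx hy h1 h2 => rw [hmul x hx, h1, h2, one_mul]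
    | inv x hx h1 =>
      have := hmul x hx x⁻¹
      rw [mul_inv_cancel, C1, h1, one_mul] at this
      exact this.symm
  have hinvt : ∀ g ∈ fsrG R, ∀ w, C (g * w) = C w := by
    intro g hg w
    rw [hmul g hg, hCG g hg, one_mul]
  have hcos : ∀ w, w * (C w)⁻¹ ∈ fsrG R := by
    refine fsr_ind _ (by simp [C1, one_mem]) ?_
    intro w a
    rw [hC]
    by_cases h : (a, w⁻¹) ∈ R
    · rw [if_pos h, mul_one]
      have h3 : w * FreeGroup.of a * (C w)⁻¹ = fsrBd (a, w⁻¹) * (w * (C w)⁻¹) := by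
        simp [fsrBd, mul_assoc]
      rw [h3, Subgroup.mul_mem_cancel_left _ (hbd _ h)]
    · rw [if_neg h]
      simp [mul_assoc]
  have hR : ∀ w a, (a, (C w)⁻¹) ∈ R ↔ (a, w⁻¹) ∈ R := by
    intro w a
    have := hiff _ (hcos w) (C w) a
    rw [inv_mul_cancel_right] at this
    exact this.symm
  have hCC : ∀ w, C (C w) = C w := by
    intro w
    have := hinvt _ (hcos w) (C w)
    rw [inv_mul_cancel_right] at this
    exact this.symm
  refine ⟨C, hinvt, hcos, ?_, ?_⟩
  · have hN : ∀ w, w * (C w)⁻¹ ∈ fsrG {p | p ∈ R ∧ C p.2⁻¹ = p.2⁻¹} := by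
      refine fsr_ind _ (by simp [C1, one_mem]) ?_
      intro w a
      rw [hC]
      by_cases h : (a, w⁻¹) ∈ R
      · rw [if_pos h, mul_one]
        have h3 : w * FreeGroup.of a * (C w)⁻¹ = (w * (C w)⁻¹) * fsrBd (a, (C w)⁻¹) := by
          simp [fsrBd, mul_assoc]
        rw [h3]
        refine (Subgroup.mul_mem_cancel_right _ ?_).symm
        exact Subgroup.subset_closure (Set.mem_image_of_mem fsrBd
          (show (a, (C w)⁻¹) ∈ {p | p ∈ R ∧ C p.2⁻¹ = p.2⁻¹} from
            ⟨(hR w a).2 h, by simp [hCC]⟩))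
      · rw [if_neg h]
        simp [mul_assoc]
    intro g hg
    simpa [hCG g hg] using hN g
  · intro H _ A ψ hψ
    obtain ⟨φ, φ1, hφ⟩ := fsr_exists (X := X)
      (fun w a => if (a, w⁻¹) ∈ R then ψ (a, (C w)⁻¹) else 1)
    have hφm : ∀ g ∈ fsrG R, ∀ w, φ (g * w) = φ g * φ w := by
      intro g hg w
      refine fsr_mul _ φ φ1 hφ g ?_ w
      intro w a
      simp only [hiff g hg w a, hinvt g hg w]
    have hφC : ∀ w, φ (C w) = 1 := by
      refine fsr_ind _ (by rw [C1, φ1]) ?_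
      intro w a
      rw [hC]
      by_cases h : (a, w⁻¹) ∈ R
      · rw [if_pos h, mul_one]
      · rw [if_neg h, hφ, if_neg (by rwa [hR]), mul_one]
    refine ⟨φ, ?_, φ1, hφm, ?_⟩
    · refine fsr_ind _ (by rw [φ1]; exact one_mem _) ?_
      intro w a
      rw [hφ, Subgroup.mul_mem_cancel_right]
      split_ifs
      · exact hψ _
      · exact one_mem _
    · intro p hp hpC
      have h1 := hφm _ (hbd p hp) p.2⁻¹
      have h2 := hφ p.2⁻¹ p.1
      have h3 : fsrBd p * p.2⁻¹ = p.2⁻¹ * FreeGroup.of p.1 := by simp [fsrBd]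
      have h4 : φ p.2⁻¹ = 1 := by rw [← hpC]; exact hφC _
      rw [h3, h2, if_pos (by simpa using hp), h4, one_mul, mul_one, hpC, inv_inv] at h1
      exact h1.symm

/-- Rack automorphisms as a subgroup of the permutations. -/
def fsrAut {Q : Type*} (RQ : RackStr Q) : Subgroup (Equiv.Perm Q) where
  carrier := {f | ∀ x y, f (RQ.act x y) = RQ.act (f x) (f y)}
  mul_mem' := by
    intro f g hf hg x y
    simp only [Equiv.Perm.mul_apply]
    rw [hg, hf]
  one_mem' := by intro x y; rfl
  inv_mem' := by
    intro f hf x y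
    apply f.injective
    rw [hf]
    simp

/-- Right translation. -/
def fsrP {Q : Type*} (RQ : RackStr Q) (q : Q) : Equiv.Perm Q where
  toFun x := RQ.act x q
  invFun x := RQ.inv x q
  left_inv x := RQ.act_inv x q
  right_inv x := RQ.inv_act x q

theorem fsrP_mem {Q : Type*} (RQ : RackStr Q) (q : Q) : fsrP RQ q ∈ fsrAut RQ :=
  fun x y => RQ.act_dist x y q

end FreeSub

theorem fsr_main.{u, v} {X : Type u} (R : Set (X × FreeGroup X))
    (hact : ∀ p ∈ R, ∀ q ∈ R, (freeRack X).act p q ∈ R)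
    (hinv : ∀ p ∈ R, ∀ q ∈ R, (freeRack X).inv p q ∈ R) :
    ∃ (S : Set (X × FreeGroup X)) (hSR : S ⊆ R),
      ∀ (Q : Type v) (RQ : RackStr Q) (ρ : S → Q),
        ∃! ρbar : R → Q,
          IsRackHom ((freeRack X).subrack R hact hinv) RQ ρbar ∧
            ∀ (s : X × FreeGroup X) (hs : s ∈ S), ρbar ⟨s, hSR hs⟩ = ρ ⟨s, hs⟩ := by
  classical
  obtain ⟨C, hinvt, hcos, hgen, hext⟩ := fsr_basis.{u, v} R hact hinv
  have hst := fsr_stable R hact hinv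
  have hbd : ∀ p ∈ R, fsrBd p ∈ fsrG R := fun p hp =>
    Subgroup.subset_closure ⟨p, hp, rfl⟩
  have hCG : ∀ u, C u⁻¹ * u ∈ fsrG R := by
    intro u
    have := inv_mem (hcos u⁻¹)
    simpa using this
  have hS : ∀ p ∈ R, (p.1, (C p.2⁻¹)⁻¹) ∈ {p | p ∈ R ∧ C p.2⁻¹ = p.2⁻¹} := by
    intro p hp
    refine ⟨?_, ?_⟩
    · have := hst _ (inv_mem (hCG p.2)) _ _ hp
      simpa using this
    · have := hinvt _ (hCG p.2) p.2⁻¹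
      simpa using this
  refine ⟨{p | p ∈ R ∧ C p.2⁻¹ = p.2⁻¹}, fun p hp => hp.1, ?_⟩
  intro Q RQ ρ
  obtain ⟨φ, hφA, φ1, hφm, hφS⟩ := hext (Equiv.Perm Q) (fsrAut RQ)
    (fun p => if h : p ∈ {p | p ∈ R ∧ C p.2⁻¹ = p.2⁻¹} then (fsrP RQ (ρ ⟨p, h⟩))⁻¹ else 1) (by
      intro p
      split_ifs
      · exact inv_mem (fsrP_mem _ _)
      · exact one_mem _)
  have hφi : ∀ g ∈ fsrG R, φ g⁻¹ = (φ g)⁻¹ := by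
    intro g hg
    have := hφm g hg g⁻¹
    rw [mul_inv_cancel, φ1] at this
    exact eq_inv_of_mul_eq_one_right this.symm
  let f : R → Q := fun r => (φ (C r.1.2⁻¹ * r.1.2))⁻¹ (ρ ⟨_, hS r.1 r.2⟩)
  have hf : ∀ r : R, f r = (φ (C r.1.2⁻¹ * r.1.2))⁻¹ (ρ ⟨_, hS r.1 r.2⟩) := fun _ => rfl
  have hbdφ : ∀ r : R, ∀ x, (φ (fsrBd r.1))⁻¹ x = RQ.act x (f r) := by
    intro r x
    have h1 : fsrBd r.1 = (C r.1.2⁻¹ * r.1.2)⁻¹ *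
        (fsrBd (r.1.1, (C r.1.2⁻¹)⁻¹) * (C r.1.2⁻¹ * r.1.2)) := by
      simp [fsrBd, mul_assoc]
    have hs := hS r.1 r.2
    rw [h1, hφm _ (inv_mem (hCG _)), hφm _ (hbd _ hs.1), hφi _ (hCG _), hφS _ hs.1 hs.2,
      dif_pos hs, hf]
    simp only [mul_inv_rev, inv_inv, Equiv.Perm.mul_apply]
    have hA := inv_mem (hφA (C r.1.2⁻¹ * r.1.2))
    have h2 := hA (φ (C r.1.2⁻¹ * r.1.2) x) (ρ ⟨_, hs⟩)
    rw [show (φ (C r.1.2⁻¹ * r.1.2))⁻¹ (φ (C r.1.2⁻¹ * r.1.2) x) = x from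
      Equiv.symm_apply_apply _ _] at h2
    exact h2
  have hfh : IsRackHom ((freeRack X).subrack R hact hinv) RQ f := by
    intro r r'
    rw [← hbdφ r']
    have hval : ((((freeRack X).subrack R hact hinv).act r r') : X × FreeGroup X)
        = (r.1.1, r.1.2 * fsrBd r'.1) := fsr_act _ _
    generalize ((freeRack X).subrack R hact hinv).act r r' = t at hval
    obtain ⟨t, ht⟩ := t
    dsimp only at hval
    subst hval
    have hCt : C (r.1.2 * fsrBd r'.1)⁻¹ = C r.1.2⁻¹ := by
      rw [mul_inv_rev, hinvt _ (inv_mem (hbd _ r'.2))]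
    rw [hf, hf]
    simp only [hCt]
    rw [← mul_assoc, hφm _ (hCG _), mul_inv_rev, Equiv.Perm.mul_apply]
  have hfS : ∀ s (hs : s ∈ {p | p ∈ R ∧ C p.2⁻¹ = p.2⁻¹}), f ⟨s, hs.1⟩ = ρ ⟨s, hs⟩ := by
    intro s hs
    rw [hf]
    obtain ⟨a, u⟩ := s
    have h2 : C u⁻¹ = u⁻¹ := hs.2
    simp [h2, φ1]
  refine ⟨f, ⟨hfh, hfS⟩, ?_⟩
  · rintro f' ⟨hf', hf'S⟩
    have key : ∀ g ∈ fsrG {p | p ∈ R ∧ C p.2⁻¹ = p.2⁻¹}, ∀ a u (h : (a, u) ∈ R)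
        (h' : (a, u * g) ∈ R), f' ⟨_, h⟩ = f ⟨_, h⟩ → f' ⟨_, h'⟩ = f ⟨_, h'⟩ := by
      have step : ∀ s (hs : s ∈ {p | p ∈ R ∧ C p.2⁻¹ = p.2⁻¹}), ∀ a u (h : (a, u) ∈ R)
        (h' : (a, u * fsrBd s) ∈ R), f' ⟨_, h⟩ = f ⟨_, h⟩ ↔ f' ⟨_, h'⟩ = f ⟨_, h'⟩ := by
        intro s hs a u h h'
        have e : (⟨_, h'⟩ : R) = ((freeRack X).subrack R hact hinv).act ⟨_, h⟩ ⟨s, hs.1⟩ :=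
          Subtype.ext (fsr_act (a, u) s).symm
        rw [e, hf', hfh, hfS s hs, hf'S s hs]
        exact (fsrP RQ (ρ ⟨s, hs⟩)).injective.eq_iff.symm
      have hsub : ∀ g ∈ fsrG {p | p ∈ R ∧ C p.2⁻¹ = p.2⁻¹}, g ∈ fsrG R := by
        intro g hg
        exact Subgroup.closure_mono (Set.image_mono (fun p hp => hp.1)) hg
      intro g hg
      induction hg using Subgroup.closure_induction'' with
      | mem x hx =>
        obtain ⟨s, hs, rfl⟩ := hx
        intro a u h h'
        exact (step s hs a u h h').1
      | inv_mem x hx =>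
        obtain ⟨s, hs, rfl⟩ := hx
        intro a u h h'
        have := (step s hs a (u * (fsrBd s)⁻¹) h' (by simpa using h)).2
        simpa using this
      | one => intro a u h h' e; simpa using e
      | mul x y hx hy h1 h2 =>
        intro a u h h' e
        have hm := hst x (hsub x hx) _ _ h
        have := h2 a (u * x) hm (by simpa [mul_assoc] using h') (h1 a u h hm e)
        simpa [mul_assoc] using this
    funext r
    obtain ⟨⟨a, u⟩, hr⟩ := r
    have hs := hS _ hr
    have := key _ (hgen _ (hCG u)) a (C u⁻¹)⁻¹ hs.1 (by simpa using hr)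
      (by rw [hfS _ hs]; exact hf'S _ hs)
    simpa using this

/-- Every subrack `R` of the free rack `FR(X) = X × F(X)` is free:
there is a subset `S ⊆ R` such that `R` with the induced operations, together with the
inclusion `S ↪ R`, satisfies the universal property of the free rack on `S`: for every
rack `Q` and every function `ρ : S → Q` there is a unique rack homomorphism
`ρ̄ : R → Q` whose restriction to `S` equals `ρ`. -/
theorem subrack_of_freeRack_is_free {X : Type*} (R : Set (X × FreeGroup X))
    (hact : ∀ p ∈ R, ∀ q ∈ R, (freeRack X).act p q ∈ R)
    (hinv : ∀ p ∈ R, ∀ q ∈ R, (freeRack X).inv p q ∈ R) :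
    ∃ (S : Set (X × FreeGroup X)) (hSR : S ⊆ R),
      ∀ (Q : Type*) (RQ : RackStr Q) (ρ : S → Q),
        ∃! ρbar : R → Q,
          IsRackHom ((freeRack X).subrack R hact hinv) RQ ρbar ∧
            ∀ (s : X × FreeGroup X) (hs : s ∈ S), ρbar ⟨s, hSR hs⟩ = ρ ⟨s, hs⟩ := by
  exact fsr_main R hact hinv
end

section
/- Let X be a set and FR(X) = X × F(X) the free rack on X. For every x ∈ X and w ∈ F(X), the subrack of FR(X) generated by the single element (x, w) (i.e., the smallest subset containing (x,w) and closed under ▷ and ▷⁻¹) is exactly the set { (x, xⁿ·w) : n ∈ ℤ }, and this set equals the preimage under the map f((y,v)) = v⁻¹·y·v of the element w⁻¹·x·w ∈ F(X). -/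
/-- The subrack of a rack generated by a subset `A`: the smallest subset containing `A`
and closed under `▷` and `▷⁻¹`. -/
def rackClosure {α : Type*} (Ra : RackStr α) (A : Set α) : Set α :=
  ⋂₀ {R : Set α | A ⊆ R ∧ (∀ x ∈ R, ∀ y ∈ R, Ra.act x y ∈ R) ∧
      ∀ x ∈ R, ∀ y ∈ R, Ra.inv x y ∈ R}

theorem toWord_letter_mul {X : Type*} [DecidableEq X] (x y : X) (b c : Bool) (g : FreeGroup X)
    (L : List (X × Bool)) (h : g.toWord = (y, c) :: L) (hxy : x ≠ y) :
    (FreeGroup.mk [(x, b)] * g).toWord = (x, b) :: (y, c) :: L := by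
  have h1 : FreeGroup.reduce ((y, c) :: L) = (y, c) :: L := by
    rw [← h, FreeGroup.reduce_toWord]
  have h2 : g = FreeGroup.mk ((y, c) :: L) := by rw [← h, FreeGroup.mk_toWord]
  rw [h2, FreeGroup.mul_mk, FreeGroup.toWord_mk, List.singleton_append, FreeGroup.reduce.cons, h1]
  simp [hxy]

theorem mem_zpowers_of_comm {X : Type*} [DecidableEq X] (x : X) (n : ℕ) : ∀ (g : FreeGroup X),
    g.toWord.length = n → FreeGroup.of x * g = g * FreeGroup.of x →
    ∃ k : ℤ, g = FreeGroup.of x ^ k := by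
  induction n with
  | zero =>
    intro g hn _
    refine ⟨0, ?_⟩
    rw [zpow_zero]
    exact FreeGroup.toWord_eq_nil_iff.1 (List.length_eq_zero_iff.1 hn)
  | succ n ih =>
    intro g hn hc
    rcases hL : g.toWord with _ | ⟨⟨y, c⟩, L⟩
    · simp [hL] at hn
    · by_cases hxy : x = y
      · subst hxy
        have hg : g = FreeGroup.mk [(x, c)] * FreeGroup.mk L := by
          rw [FreeGroup.mul_mk, List.singleton_append, ← hL, FreeGroup.mk_toWord]
        have hp : ∃ e : ℤ, FreeGroup.mk [(x, c)] = FreeGroup.of x ^ e := by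
          cases c
          · exact ⟨-1, by simp [FreeGroup.of, FreeGroup.inv_mk, FreeGroup.invRev]⟩
          · exact ⟨1, by simp [FreeGroup.of]⟩
        obtain ⟨e, he⟩ := hp
        have hlen : (FreeGroup.mk L).toWord.length = n := by
          have hr : FreeGroup.IsReduced ((x, c) :: L) := by
            rw [← hL]; exact FreeGroup.isReduced_toWord
          have hr' : FreeGroup.IsReduced L := hr.infix ⟨[(x, c)], [], by simp⟩
          rw [FreeGroup.toWord_mk, hr'.reduce_eq]
          simpa [hL] using hn
        have hc' : FreeGroup.of x * FreeGroup.mk L = FreeGroup.mk L * FreeGroup.of x := by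
          have h3 : FreeGroup.mk L = FreeGroup.of x ^ (-e) * g := by rw [hg, he]; group
          have h4 : Commute (FreeGroup.of x) g := hc
          rw [h3]
          exact ((Commute.refl (FreeGroup.of x)).zpow_right (-e)).mul_right h4
        obtain ⟨k, hk⟩ := ih _ hlen hc'
        exact ⟨e + k, by rw [hg, he, hk, zpow_add]⟩
      · exfalso
        have h1 := toWord_letter_mul x y true c g L hL hxy
        have h2 := FreeGroup.toWord_mul_sublist g (FreeGroup.of x)
        rw [← hc, FreeGroup.toWord_of, hL] at h2
        change (FreeGroup.of x * g).toWord = _ at h1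
        rw [h1] at h2
        have h3 := h2.eq_of_length (by simp)
        simp at h3
        exact hxy h3.1.1

/-- In the free rack `FR(X) = X × F(X)`, the subrack generated by a
single element `(x, w)` is exactly `{(x, xⁿ·w) : n ∈ ℤ}`, and this set is the preimage
of `w⁻¹·x·w` under the map `f((y,v)) = v⁻¹·y·v`. -/
theorem rackClosure_singleton_freeRack {X : Type*} (x : X) (w : FreeGroup X) :
    rackClosure (freeRack X) {(x, w)} =
        {p : X × FreeGroup X | ∃ n : ℤ, p = (x, FreeGroup.of x ^ n * w)} ∧
      {p : X × FreeGroup X | ∃ n : ℤ, p = (x, FreeGroup.of x ^ n * w)} =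
        (fun p : X × FreeGroup X => p.2⁻¹ * FreeGroup.of p.1 * p.2) ⁻¹'
          {w⁻¹ * FreeGroup.of x * w} := by
  classical
  refine ⟨?_, ?_⟩
  · apply Set.Subset.antisymm
    · apply Set.sInter_subset_of_mem
      refine ⟨?_, ?_, ?_⟩
      · rintro _ rfl
        exact ⟨0, by simp⟩
      · rintro _ ⟨n, rfl⟩ _ ⟨m, rfl⟩
        refine ⟨n + 1, ?_⟩
        simp only [freeRack, Prod.mk.injEq, true_and]
        group
      · rintro _ ⟨n, rfl⟩ _ ⟨m, rfl⟩
        refine ⟨n - 1, ?_⟩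
        simp only [freeRack, Prod.mk.injEq, true_and]
        group
    · rintro _ ⟨n, rfl⟩ R ⟨hA, hact, hinv⟩
      have h0 : (x, w) ∈ R := hA rfl
      induction n with
      | zero => simpa using h0
      | succ n ih =>
        convert hact _ ih _ h0 using 1
        simp only [freeRack, Prod.mk.injEq, true_and]
        group
      | pred n ih =>
        convert hinv _ ih _ h0 using 1
        simp only [freeRack, Prod.mk.injEq, true_and]
        group
  · ext ⟨y, v⟩
    simp only [Set.mem_ofPred_eq, Set.mem_preimage, Set.mem_singleton_iff, Prod.mk.injEq]
    constructor
    · rintro ⟨n, rfl, rfl⟩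
      group
    · intro h
      have hyx : y = x := by
        have h' := congrArg (FreeGroup.lift fun z => Multiplicative.ofAdd (Finsupp.single z (1 : ℤ))) h
        simp only [map_mul, map_inv, FreeGroup.lift_apply_of, inv_mul_cancel_comm] at h'
        exact Finsupp.single_left_injective one_ne_zero (Multiplicative.ofAdd.injective h')
      subst hyx
      have hc : FreeGroup.of y * (v * w⁻¹) = (v * w⁻¹) * FreeGroup.of y := by
        calc FreeGroup.of y * (v * w⁻¹) = v * (v⁻¹ * FreeGroup.of y * v) * w⁻¹ := by group
          _ = _ := by rw [h]; group
      obtain ⟨k, hk⟩ := mem_zpowers_of_comm y _ (v * w⁻¹) rfl hc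
      exact ⟨k, rfl, by rw [← hk]; group⟩
end

section
/- Let X be a set and FR(X) = X × F(X) the free rack on X. For x ∈ X, w ∈ F(X), and an integer k ≥ 1, the k-th rack power of (x,w), defined by (x,w)^[1] = (x,w) and (x,w)^[k+1] = (x,w)^[k] ▷ (x,w)^[k], equals (x, x^{k-1}·w). Consequently, the rack powers of any element of FR(X) are pairwise distinct: for k, l ≥ 1 with k ≠ l, (x,w)^[k] ≠ (x,w)^[l]. -/
/-- In the free rack `FR(X) = X × F(X)`, let `P p k` denote the `k`-th
rack power `p^[k]` (for `k ≥ 1`), characterized by `p^[1] = p` and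
`p^[k+1] = p^[k] ▷ p^[k]`. Then `(x,w)^[k] = (x, x^(k-1)·w)`; consequently the rack
powers of any element are pairwise distinct: `(x,w)^[k] ≠ (x,w)^[l]` for `k ≠ l`
(`k, l ≥ 1`). -/
theorem freeRack_rackPow {X : Type*} (P : X × FreeGroup X → ℕ → X × FreeGroup X)
    (hP1 : ∀ p, P p 1 = p)
    (hPsucc : ∀ p k, 1 ≤ k → P p (k + 1) = (freeRack X).act (P p k) (P p k)) :
    (∀ (x : X) (w : FreeGroup X) (k : ℕ), 1 ≤ k →
        P (x, w) k = (x, FreeGroup.of x ^ (k - 1) * w)) ∧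
      ∀ (x : X) (w : FreeGroup X) (k l : ℕ), 1 ≤ k → 1 ≤ l → k ≠ l →
        P (x, w) k ≠ P (x, w) l := by
  have key : ∀ (x : X) (w : FreeGroup X) (k : ℕ), 1 ≤ k →
      P (x, w) k = (x, FreeGroup.of x ^ (k - 1) * w) := by
    intro x w k hk
    induction k, hk using Nat.le_induction with
    | base => simp [hP1]
    | succ k hk ih =>
      rw [hPsucc _ _ hk, ih]
      obtain ⟨m, rfl⟩ : ∃ m, k = m + 1 := ⟨k - 1, by omega⟩
      simp only [freeRack, Nat.add_sub_cancel, Prod.mk.injEq, true_and]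
      rw [mul_inv_cancel, one_mul, pow_succ', mul_assoc]
  refine ⟨key, ?_⟩
  intro x w k l hk hl hkl h
  rw [key x w k hk, key x w l hl] at h
  have h2 := mul_right_cancel (Prod.mk.inj h).2
  have h3 := congrArg (FreeGroup.lift (fun _ : X => Multiplicative.ofAdd (1 : ℤ))) h2
  simp only [map_pow, FreeGroup.lift_apply_of] at h3
  have h4 := congrArg Multiplicative.toAdd h3
  simp only [toAdd_pow, toAdd_ofAdd, nsmul_eq_mul, mul_one] at h4
  omega
end
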